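/- arXiv:2403.15563 — 2 statements merged into one kernel-verified Lean document; each statement's English description precedes it below -/
import Mathlib

section
/- Let D = ∏_{i=1}^d [a_i, b_i] ⊂ ℝ^d with a_i < b_i, let v ⊆ u ⊆ {1,…,d}, and let f : D → ℝ be |v| times continuously differentiable (so that ∂_v f := ∂^{|v|} f / ∏_{i∈v} ∂x_i exists and is continuous). Then the ANOVA term satisfies the L¹ bound ∫_{D_u} |f_{u,A}(x_u)| dx_u ≤ 2^{|u|−|v|} · (vol(D_u) · vol(D_v) / vol(D)) · ∫_D |∂_v f(x)| dx, where all integrals are with respect to Lebesgue measure, D_w = ∏_{i∈w} [a_i, b_i], and vol(D_w) = ∏_{i∈w} (b_i − a_i). -/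
open MeasureTheory

/-- The ANOVA decomposition term
`f_{u,A}(x) = Σ_{v ⊆ u} (−1)^{|u|−|v|} (1/vol(D_{vᶜ})) ∫_{D_{vᶜ}} f(x^{v,s}) ds`. -/
noncomputable def anovaTerm {d : ℕ} (a b : Fin d → ℝ) (f : (Fin d → ℝ) → ℝ)
    (u : Finset (Fin d)) (x : Fin d → ℝ) : ℝ :=
  ∑ v ∈ u.powerset, (-1 : ℝ) ^ (u.card - v.card) *
    ((∏ i ∈ vᶜ, (b i - a i))⁻¹ *
      ∫ s : {i : Fin d // i ∉ v} → ℝ in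
          Set.univ.pi (fun i : {i : Fin d // i ∉ v} => Set.Icc (a i.1) (b i.1)),
        f (fun i => if h : i ∈ v then x i else s ⟨i, h⟩))

/-- The mixed partial derivative `∂_v f = ∂^{|v|} f / ∏_{i∈v} ∂x_i`. -/
noncomputable def mixedPartial {d : ℕ} (v : Finset (Fin d)) (f : (Fin d → ℝ) → ℝ) :
    (Fin d → ℝ) → ℝ :=
  v.toList.foldr (fun i g => fun x => fderiv ℝ g x (Pi.single i 1)) f

/-!
Averaging over an independent second point `s`, the ANOVA term becomes
`f_{u,A}(x) = ∫ Δ_u f(x, s) ds`, where `Δ_u f(x, s) = ∑_{w ⊆ u} (-1)^{|u|-|w|} f(x_w, s_{-w})` is a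
mixed difference and `ds` is the uniform probability measure on the box. Mixed differences compose,
`Δ_u = Δ_{u∖v} Δ_v`. The factor `Δ_v` is controlled by `∂_v f` through the fundamental theorem of
calculus in one coordinate after another, and `Δ_{u∖v}` is a sum of `2^{|u|-|v|}` terms, each of
which has the same `L¹` norm because `(x_w, s_{-w})` is again uniformly distributed.
-/

section MixedDiff

variable {ι : Type*} [DecidableEq ι] {X : ι → Type*} {E : Type*}

section Algebra

variable [AddCommGroup E]

/-- The mixed difference `Δ_u f(x, s) = ∑_{w ⊆ u} (-1)^{|u|-|w|} f(x_w, s_{-w})`: the alternating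
sum of `f` over the vertices of the box spanned by `s` and `x` in the coordinates of `u`, the
remaining coordinates being those of `s`. -/
def mixedDiff (u : Finset ι) (f : (∀ i, X i) → E) (x s : ∀ i, X i) : E :=
  ∑ w ∈ u.powerset, (-1 : ℤ) ^ (u.card - w.card) • f (w.piecewise x s)

theorem mixedDiff_empty (f : (∀ i, X i) → E) (x s : ∀ i, X i) : mixedDiff ∅ f x s = f s := by
  simp [mixedDiff]

theorem mixedDiff_insert {i : ι} {u : Finset ι} (hi : i ∉ u) (f : (∀ i, X i) → E)
    (x s : ∀ i, X i) :
    mixedDiff (insert i u) f x s =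
      mixedDiff u f x (Function.update s i (x i)) - mixedDiff u f x s := by
  rw [mixedDiff, Finset.sum_powerset_insert hi, add_comm, sub_eq_add_neg, mixedDiff, mixedDiff,
    ← Finset.sum_neg_distrib]
  congr 1 <;> refine Finset.sum_congr rfl fun w hw => ?_ <;>
    have hwu := Finset.mem_powerset.1 hw <;> have hiw : i ∉ w := fun h => hi (hwu h)
  · rw [Finset.piecewise_insert, Finset.update_piecewise_of_notMem _ _ _ hiw,
      Finset.card_insert_of_notMem hi, Finset.card_insert_of_notMem hiw, Nat.add_sub_add_right]
  · rw [Finset.card_insert_of_notMem hi, Nat.sub_add_comm (Finset.card_le_card hwu), pow_succ,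
      mul_neg_one, neg_smul]

theorem mixedDiff_union {u v : Finset ι} (huv : Disjoint u v) (f : (∀ i, X i) → E)
    (x s : ∀ i, X i) : mixedDiff (u ∪ v) f x s = mixedDiff u (mixedDiff v f x) x s := by
  induction u using Finset.induction_on generalizing s with
  | empty => rw [Finset.empty_union, mixedDiff_empty]
  | insert i u hi ih =>
    obtain ⟨hiv, huv⟩ := Finset.disjoint_insert_left.1 huv
    rw [Finset.insert_union, mixedDiff_insert (by simp [hi, hiv]), mixedDiff_insert hi,
      ih huv, ih huv]

end Algebra

theorem norm_mixedDiff_le_sum [SeminormedAddCommGroup E] (u : Finset ι) (f : (∀ i, X i) → E)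
    (x s : ∀ i, X i) : ‖mixedDiff u f x s‖ ≤ ∑ w ∈ u.powerset, ‖f (w.piecewise x s)‖ := by
  refine norm_sum_le_of_le _ fun w _ => ?_
  rcases neg_one_pow_eq_or ℤ (u.card - w.card) with h | h <;> simp [h]

end MixedDiff

section PiecewiseIntegral

variable {ι : Type*} [DecidableEq ι] {X : ι → Type*} {E : Type*} [NormedAddCommGroup E]

theorem piecewise_update_eq_insert_piecewise {i : ι} {u : Finset ι} (hi : i ∉ u)
    (x y z : ∀ i, X i) :
    u.piecewise x (Function.update z i (y i)) = (insert i u).piecewise (u.piecewise x y) z := by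
  rw [Finset.piecewise_insert, Finset.update_piecewise_of_notMem _ _ _ hi,
    Finset.piecewise_eq_of_notMem _ _ _ hi, Finset.piecewise_piecewise_of_subset_left subset_rfl]

theorem continuous_finset_piecewise [∀ i, TopologicalSpace (X i)] {Y : Type*} [TopologicalSpace Y]
    (w : Finset ι) {g h : Y → ∀ i, X i} (hg : Continuous g) (hh : Continuous h) :
    Continuous fun y => w.piecewise (g y) (h y) := by
  refine continuous_pi fun i => ?_
  by_cases hi : i ∈ w <;> simp only [hi, Finset.piecewise_eq_of_mem,
    Finset.piecewise_eq_of_notMem, not_false_eq_true] <;> fun_prop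

variable [Fintype ι] [∀ i, MeasurableSpace (X i)] (ν : ∀ i, Measure (X i))
  [∀ i, IsProbabilityMeasure (ν i)]

theorem measurePreserving_finset_piecewise (w : Finset ι) :
    MeasurePreserving (fun p : (∀ i, X i) × (∀ i, X i) => w.piecewise p.1 p.2)
      ((Measure.pi ν).prod (Measure.pi ν)) (Measure.pi ν) := by
  have measurable_piecewise :
      Measurable fun p : (∀ i, X i) × (∀ i, X i) => w.piecewise p.1 p.2 := by
    refine measurable_pi_lambda _ fun i => ?_
    by_cases hi : i ∈ w <;> simp only [hi, Finset.piecewise_eq_of_mem,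
      Finset.piecewise_eq_of_notMem, not_false_eq_true] <;> fun_prop
  refine ⟨measurable_piecewise, (Measure.pi_eq fun s hs => ?_).symm⟩
  have preimage_eq : (fun p : (∀ i, X i) × (∀ i, X i) => w.piecewise p.1 p.2) ⁻¹' Set.univ.pi s =
      (Set.univ.pi fun i => if i ∈ w then s i else Set.univ) ×ˢ
        (Set.univ.pi fun i => if i ∈ w then Set.univ else s i) := by
    ext p
    simp only [Set.mem_preimage, Set.mem_pi, Set.mem_univ, true_imp_iff, Set.mem_prod,
      ← forall_and]
    refine forall_congr' fun i => ?_
    by_cases hi : i ∈ w <;> simp [hi]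
  rw [Measure.map_apply measurable_piecewise (MeasurableSet.univ_pi hs), preimage_eq,
    Measure.prod_prod, Measure.pi_pi, Measure.pi_pi, ← Finset.prod_mul_distrib]
  refine Finset.prod_congr rfl fun i _ => ?_
  by_cases hi : i ∈ w <;> simp [hi]

variable {ν}

theorem integrable_comp_finset_piecewise (w : Finset ι) {f : (∀ i, X i) → E}
    (hf : Integrable f (Measure.pi ν)) :
    Integrable (fun p : (∀ i, X i) × (∀ i, X i) => f (w.piecewise p.1 p.2))
      ((Measure.pi ν).prod (Measure.pi ν)) :=
  (measurePreserving_finset_piecewise ν w).integrable_comp_of_integrable hf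

theorem integrable_mixedDiff (u : Finset ι) {f : (∀ i, X i) → E}
    (hf : Integrable f (Measure.pi ν)) :
    Integrable (fun p : (∀ i, X i) × (∀ i, X i) => mixedDiff u f p.1 p.2)
      ((Measure.pi ν).prod (Measure.pi ν)) := by
  refine integrable_finsetSum _ fun w _ => ?_
  have hw := integrable_comp_finset_piecewise w hf
  rcases neg_one_pow_eq_or ℤ (u.card - w.card) with h | h
  · simpa [h] using hw
  · simpa [h] using hw.neg

variable [NormedSpace ℝ E]

theorem integral_comp_finset_piecewise (w : Finset ι) {f : (∀ i, X i) → E}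
    (hf : AEStronglyMeasurable f (Measure.pi ν)) :
    ∫ p : (∀ i, X i) × (∀ i, X i), f (w.piecewise p.1 p.2) ∂(Measure.pi ν).prod (Measure.pi ν) =
      ∫ x, f x ∂Measure.pi ν := by
  have hw := measurePreserving_finset_piecewise ν w
  rw [← hw.map_eq] at hf
  rw [← integral_map hw.measurable.aemeasurable hf, hw.map_eq]

theorem integral_integral_finset_piecewise (w : Finset ι) {f : (∀ i, X i) → E}
    (hf : Integrable f (Measure.pi ν)) :
    ∫ s, ∫ x, f (w.piecewise x s) ∂Measure.pi ν ∂Measure.pi ν = ∫ x, f x ∂Measure.pi ν := by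
  rw [← integral_comp_finset_piecewise w hf.1,
    integral_prod_symm _ (integrable_comp_finset_piecewise w hf)]

end PiecewiseIntegral

section UniformBox

open scoped ProbabilityTheory

theorem integral_pi_comp_subtype {ι : Type*} [Fintype ι] {X : ι → Type*}
    [∀ i, MeasurableSpace (X i)] {ν : ∀ i, Measure (X i)} [∀ i, IsProbabilityMeasure (ν i)]
    {E : Type*} [NormedAddCommGroup E] [NormedSpace ℝ E] (p : ι → Prop) [Fintype {i // p i}]
    (g : (∀ i : {i // p i}, X i) → E) :
    ∫ x, g (fun i => x i) ∂Measure.pi ν = ∫ y, g y ∂Measure.pi fun i : {i // p i} => ν i := by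
  classical
  obtain rfl : ‹Fintype {i // p i}› = Subtype.fintype p := Subsingleton.elim _ _
  calc ∫ x, g (fun i => x i) ∂Measure.pi ν
      = ∫ q, g q.1 ∂(Measure.pi fun i : {i // p i} => ν i).prod
          (Measure.pi fun i : {i // ¬p i} => ν i) :=
        (measurePreserving_piEquivPiSubtypeProd ν p).integral_comp' fun q => g q.1
    _ = ∫ y, g y ∂Measure.pi fun i : {i // p i} => ν i := by
        rw [integral_fun_fst, probReal_univ, one_smul]

theorem isProbabilityMeasure_cond_Icc {a b : ℝ} (hab : a < b) :
    IsProbabilityMeasure (volume[|Set.Icc a b]) :=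
  ProbabilityTheory.cond_isProbabilityMeasure_of_finite (by simpa using hab) (by simp)

theorem pi_cond_eq_cond_pi {ι : Type*} [Fintype ι] {X : ι → Type*} [∀ i, MeasurableSpace (X i)]
    {μ : ∀ i, Measure (X i)} [∀ i, SigmaFinite (μ i)] {s : ∀ i, Set (X i)}
    (h_zero : ∀ i, μ i (s i) ≠ 0) (h_top : ∀ i, μ i (s i) ≠ ⊤) :
    Measure.pi (fun i => (μ i)[|s i]) = (Measure.pi μ)[|Set.univ.pi s] := by
  have := fun i => ProbabilityTheory.cond_isProbabilityMeasure_of_finite (h_zero i) (h_top i)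
  refine Measure.pi_eq fun t ht => ?_
  rw [ProbabilityTheory.cond_apply' (MeasurableSet.univ_pi ht), ← Set.pi_inter_distrib,
    Measure.pi_pi, Measure.pi_pi, ENNReal.prod_inv_distrib fun i _ _ _ _ => .inl (h_zero i),
    ← Finset.prod_mul_distrib]
  exact Finset.prod_congr rfl fun i _ => (ProbabilityTheory.cond_apply' (ht i) _).symm

variable {ι : Type*} [Fintype ι] {a b : ι → ℝ} {E : Type*} [NormedAddCommGroup E]

/-- The uniform probability measure on the box `∏ i, [a i, b i]`, which turns the averages over
faces of the box in the ANOVA decomposition into expectations. It is encoded as a product measure so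
that the results on products of probability measures apply. -/
noncomputable abbrev uniformBox (a b : ι → ℝ) : Measure (ι → ℝ) :=
  Measure.pi fun i => volume[|Set.Icc (a i) (b i)]

theorem uniformBox_eq_cond (hab : ∀ i, a i < b i) :
    uniformBox a b = volume[|Set.univ.pi fun i => Set.Icc (a i) (b i)] :=
  pi_cond_eq_cond_pi (fun i => by simpa using hab i) (fun i => by simp)

theorem ae_uniformBox_mem (hab : ∀ i, a i < b i) :
    ∀ᵐ x ∂uniformBox a b, ∀ i, x i ∈ Set.Icc (a i) (b i) := by
  rw [uniformBox_eq_cond hab]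
  filter_upwards [ProbabilityTheory.ae_cond_mem (MeasurableSet.univ_pi fun i => measurableSet_Icc)]
    with x hx i using hx i trivial

theorem integrable_uniformBox_of_continuous (hab : ∀ i, a i < b i) {f : (ι → ℝ) → E}
    (hf : Continuous f) : Integrable f (uniformBox a b) := by
  rw [uniformBox_eq_cond hab]
  refine Integrable.smul_measure ?_ ?_
  · exact hf.continuousOn.integrableOn_compact (isCompact_univ_pi fun i => isCompact_Icc)
  · simp [Real.volume_Icc_pi, Finset.prod_eq_zero_iff, hab]

variable [NormedSpace ℝ E]

theorem integral_uniformBox (hab : ∀ i, a i < b i) (f : (ι → ℝ) → E) :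
    ∫ x, f x ∂uniformBox a b = (∏ i, (b i - a i))⁻¹ •
      ∫ x in Set.univ.pi fun i => Set.Icc (a i) (b i), f x := by
  rw [uniformBox_eq_cond hab, ProbabilityTheory.cond, integral_smul_measure, ENNReal.toReal_inv,
    Set.pi_univ_Icc, Real.volume_Icc_pi_toReal fun i => (hab i).le]

theorem integral_uniformBox_comp_subtype (hab : ∀ i, a i < b i) (p : ι → Prop)
    [Fintype {i // p i}] {s : Finset ι} (hs : ∀ i, i ∈ s ↔ p i) (g : ({i // p i} → ℝ) → E) :
    ∫ x, g (fun i => x i) ∂uniformBox a b = (∏ i ∈ s, (b i - a i))⁻¹ •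
      ∫ y in Set.univ.pi fun i : {i // p i} => Set.Icc (a i) (b i), g y := by
  have := fun i => isProbabilityMeasure_cond_Icc (hab i)
  rw [integral_pi_comp_subtype, Finset.prod_subtype s hs]
  exact integral_uniformBox (fun i : {i // p i} => hab i) g

end UniformBox

section Derivative

variable {E : Type*} [NormedAddCommGroup E] [NormedSpace ℝ E]

theorem norm_sub_le_setIntegral_Icc_norm_deriv {a b : ℝ} {g g' : ℝ → E}
    (hg : ∀ t, HasDerivAt g (g' t) t) (hg' : Continuous g') {p q : ℝ}
    (hp : p ∈ Set.Icc a b) (hq : q ∈ Set.Icc a b) :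
    ‖g p - g q‖ ≤ ∫ t in Set.Icc a b, ‖g' t‖ := by
  wlog hqp : q ≤ p generalizing p q
  · rw [norm_sub_rev]
    exact this hq hp (le_of_not_ge hqp)
  have hdiff : Differentiable ℝ g := fun t => (hg t).differentiableAt
  calc ‖g p - g q‖
      ≤ ∫ t in q..p, ‖g' t‖ :=
        norm_sub_le_integral_of_norm_deriv_le_of_le hqp hdiff.continuous.continuousOn
          hdiff.differentiableOn (.of_forall fun t _ => (congrArg norm (hg t).deriv).le)
          (hg'.norm.intervalIntegrable q p)
    _ = ∫ t in Set.Ioc q p, ‖g' t‖ := intervalIntegral.integral_of_le hqp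
    _ ≤ ∫ t in Set.Icc a b, ‖g' t‖ :=
        setIntegral_mono_set hg'.norm.integrableOn_Icc (.of_forall fun t => norm_nonneg _)
          (Set.Ioc_subset_Icc_self.trans (Set.Icc_subset_Icc hq.1 hp.2)).eventuallyLE

open scoped ProbabilityTheory in
theorem norm_sub_le_integral_uniformBox_norm_deriv {ι : Type*} [Fintype ι]
    {a b : ι → ℝ} (hab : ∀ i, a i < b i) (i : ι) {g g' : ℝ → E}
    (hg : ∀ t, HasDerivAt g (g' t) t) (hg' : Continuous g') {p q : ℝ}
    (hp : p ∈ Set.Icc (a i) (b i)) (hq : q ∈ Set.Icc (a i) (b i)) :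
    ‖g p - g q‖ ≤ (b i - a i) * ∫ t, ‖g' (t i)‖ ∂uniformBox a b := by
  have := fun i => isProbabilityMeasure_cond_Icc (hab i)
  have integral_eq : ∫ t, ‖g' (t i)‖ ∂uniformBox a b =
      (b i - a i)⁻¹ * ∫ t in Set.Icc (a i) (b i), ‖g' t‖ := by
    rw [integral_comp_eval (μ := fun i => volume[|Set.Icc (a i) (b i)]) (f := fun t => ‖g' t‖)
      hg'.norm.aestronglyMeasurable, ProbabilityTheory.cond, integral_smul_measure, Real.volume_Icc,
      ENNReal.toReal_inv, ENNReal.toReal_ofReal (sub_pos.2 (hab i)).le, smul_eq_mul]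
  rw [integral_eq, mul_inv_cancel_left₀ (sub_pos.2 (hab i)).ne']
  exact norm_sub_le_setIntegral_Icc_norm_deriv hg hg' hp hq

variable {ι : Type*} [DecidableEq ι]

theorem hasDerivAt_mixedDiff_update [Finite ι] {i : ι} {u : Finset ι} (hi : i ∉ u) {f : (ι → ℝ) → E}
    (hf : Differentiable ℝ f) (x z : ι → ℝ) (t : ℝ) :
    HasDerivAt (fun t => mixedDiff u f x (Function.update z i t))
      (mixedDiff u (fun y => fderiv ℝ f y (Pi.single i 1)) x (Function.update z i t)) t := by
  cases nonempty_fintype ι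
  refine HasDerivAt.fun_sum fun w hw => HasDerivAt.fun_const_smul _ ?_
  have hiw : i ∉ w := fun h => hi (Finset.mem_powerset.1 hw h)
  simp only [← Finset.update_piecewise_of_notMem _ _ _ hiw]
  exact (hf _).hasFDerivAt.comp_hasDerivAt t (hasDerivAt_update _ i t)

/-- The iterated partial derivative `∂_{i₁} ⋯ ∂_{iₖ} f` for `l = [i₁, …, iₖ]`; the one with respect
to the last entry of `l` is taken first. For `l = v.toList` it is `mixedPartial v f`. -/
noncomputable def iteratedPartial (l : List ι) (f : (ι → ℝ) → E) : (ι → ℝ) → E :=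
  l.foldr (fun i g x => fderiv ℝ g x (Pi.single i 1)) f

theorem iteratedPartial_concat (l : List ι) (i : ι) (f : (ι → ℝ) → E) :
    iteratedPartial (l ++ [i]) f = iteratedPartial l fun x => fderiv ℝ f x (Pi.single i 1) :=
  List.foldr_append

variable [Fintype ι]

theorem contDiff_partial {n : WithTop ℕ∞} {f : (ι → ℝ) → E} (hf : ContDiff ℝ (n + 1) f) (i : ι) :
    ContDiff ℝ n fun x => fderiv ℝ f x (Pi.single i 1) :=
  (hf.fderiv_right le_rfl).clm_apply contDiff_const

theorem continuous_iteratedPartial {l : List ι} {f : (ι → ℝ) → E} (hf : ContDiff ℝ l.length f) :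
    Continuous (iteratedPartial l f) := by
  induction l using List.reverseRecOn generalizing f with
  | nil => exact hf.continuous
  | append_singleton l i ih =>
    rw [iteratedPartial_concat]
    exact ih (contDiff_partial (by simpa using hf) i)

variable {a b : ι → ℝ}

theorem norm_mixedDiff_insert_le_integral (hab : ∀ i, a i < b i) {i : ι} {u : Finset ι} (hi : i ∉ u)
    {f : (ι → ℝ) → E} (hf : ContDiff ℝ 1 f) (x : ι → ℝ) {z : ι → ℝ}
    (hx : x i ∈ Set.Icc (a i) (b i)) (hz : z i ∈ Set.Icc (a i) (b i)) :
    ‖mixedDiff (insert i u) f x z‖ ≤ (b i - a i) * ∫ t,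
      ‖mixedDiff u (fun y => fderiv ℝ f y (Pi.single i 1)) x (Function.update z i (t i))‖
        ∂uniformBox a b := by
  have continuous_deriv : Continuous fun t =>
      mixedDiff u (fun y => fderiv ℝ f y (Pi.single i 1)) x (Function.update z i t) :=
    continuous_finsetSum _ fun w _ => ((contDiff_partial (n := 0) hf i).continuous.comp
      (continuous_finset_piecewise w continuous_const
        (continuous_const.update i continuous_id))).fun_const_smul _
  have ftc := norm_sub_le_integral_uniformBox_norm_deriv hab i
    (hasDerivAt_mixedDiff_update hi (hf.differentiable one_ne_zero) x z) continuous_deriv hx hz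
  rwa [Function.update_eq_self, ← mixedDiff_insert hi] at ftc

theorem norm_mixedDiff_le_integral_iteratedPartial (hab : ∀ i, a i < b i) {l : List ι}
    (hl : l.Nodup) {f : (ι → ℝ) → E} (hf : ContDiff ℝ l.length f) {x z : ι → ℝ}
    (hx : ∀ i, x i ∈ Set.Icc (a i) (b i)) (hz : ∀ i, z i ∈ Set.Icc (a i) (b i)) :
    ‖mixedDiff l.toFinset f x z‖ ≤ (∏ i ∈ l.toFinset, (b i - a i)) *
      ∫ t, ‖iteratedPartial l f (l.toFinset.piecewise t z)‖ ∂uniformBox a b := by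
  have := fun i => isProbabilityMeasure_cond_Icc (hab i)
  induction l using List.reverseRecOn generalizing f z with
  | nil =>
    rw [List.toFinset_nil]
    simp [mixedDiff_empty, iteratedPartial, Finset.piecewise_empty]
  | append_singleton l i ih =>
    obtain ⟨hil, hl⟩ := (List.nodup_concat l i).1 (List.concat_eq_append ▸ hl)
    have hi : i ∉ l.toFinset := by simpa using hil
    have toFinset_concat : (l ++ [i]).toFinset = insert i l.toFinset := by simp
    have contDiff_succ : ContDiff ℝ (l.length + 1) f := by simpa using hf
    set F : (ι → ℝ) → E := fun y => fderiv ℝ f y (Pi.single i 1)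
    have hFl : ContDiff ℝ l.length F := contDiff_partial contDiff_succ i
    set k : (ι → ℝ) → ℝ := fun t => ‖iteratedPartial l F ((insert i l.toFinset).piecewise t z)‖
    have integrable_k : Integrable k (uniformBox a b) :=
      integrable_uniformBox_of_continuous hab ((continuous_iteratedPartial hFl).comp
        (continuous_finset_piecewise _ continuous_id continuous_const)).norm
    have ih_ae : ∀ᵐ s ∂uniformBox a b, ‖mixedDiff l.toFinset F x (Function.update z i (s i))‖ ≤
        (∏ j ∈ l.toFinset, (b j - a j)) * ∫ t, k (l.toFinset.piecewise t s) ∂uniformBox a b := by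
      filter_upwards [ae_uniformBox_mem hab] with s hs
      simp only [k, ← piecewise_update_eq_insert_piecewise hi]
      refine ih hl hFl fun j => ?_
      rcases eq_or_ne j i with rfl | hj <;> simp [*]
    rw [toFinset_concat, iteratedPartial_concat, Finset.prod_insert hi, mul_assoc]
    refine (norm_mixedDiff_insert_le_integral hab hi (contDiff_succ.of_le le_add_self) x (hx i)
      (hz i)).trans (mul_le_mul_of_nonneg_left ?_ (sub_pos.2 (hab i)).le)
    calc ∫ s, ‖mixedDiff l.toFinset F x (Function.update z i (s i))‖ ∂uniformBox a b
        ≤ ∫ s, (∏ j ∈ l.toFinset, (b j - a j)) *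
            ∫ t, k (l.toFinset.piecewise t s) ∂uniformBox a b ∂uniformBox a b :=
          integral_mono_of_nonneg (.of_forall fun s => norm_nonneg _)
            ((integrable_comp_finset_piecewise _ integrable_k).integral_prod_right.const_mul _)
            ih_ae
      _ = (∏ j ∈ l.toFinset, (b j - a j)) * ∫ t, k t ∂uniformBox a b := by
          rw [integral_const_mul, integral_integral_finset_piecewise _ integrable_k]

theorem norm_mixedDiff_le_sum_integral_iteratedPartial (hab : ∀ i, a i < b i) {l : List ι}
    (hl : l.Nodup) {u : Finset ι} (hlu : l.toFinset ⊆ u) {f : (ι → ℝ) → E}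
    (hf : ContDiff ℝ l.length f) {x s : ι → ℝ} (hx : ∀ i, x i ∈ Set.Icc (a i) (b i))
    (hs : ∀ i, s i ∈ Set.Icc (a i) (b i)) :
    ‖mixedDiff u f x s‖ ≤ ∑ w ∈ (u \ l.toFinset).powerset, (∏ i ∈ l.toFinset, (b i - a i)) *
      ∫ t, ‖iteratedPartial l f (l.toFinset.piecewise t (w.piecewise x s))‖ ∂uniformBox a b := by
  calc ‖mixedDiff u f x s‖
      = ‖mixedDiff (u \ l.toFinset) (mixedDiff l.toFinset f x) x s‖ := by
        rw [← mixedDiff_union Finset.sdiff_disjoint, Finset.sdiff_union_of_subset hlu]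
    _ ≤ ∑ w ∈ (u \ l.toFinset).powerset, ‖mixedDiff l.toFinset f x (w.piecewise x s)‖ :=
        norm_mixedDiff_le_sum _ _ _ _
    _ ≤ _ := Finset.sum_le_sum fun w _ =>
        norm_mixedDiff_le_integral_iteratedPartial hab hl hf hx fun i =>
          w.piecewise_cases x s (· ∈ Set.Icc (a i) (b i)) (hx i) (hs i)

theorem integral_norm_mixedDiff_le (hab : ∀ i, a i < b i) {l : List ι} (hl : l.Nodup)
    {u : Finset ι} (hlu : l.toFinset ⊆ u) {f : (ι → ℝ) → E} (hf : ContDiff ℝ l.length f) :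
    ∫ p, ‖mixedDiff u f p.1 p.2‖ ∂(uniformBox a b).prod (uniformBox a b) ≤
      2 ^ (u.card - l.toFinset.card) * ((∏ i ∈ l.toFinset, (b i - a i)) *
        ∫ x, ‖iteratedPartial l f x‖ ∂uniformBox a b) := by
  have := fun i => isProbabilityMeasure_cond_Icc (hab i)
  set μ := uniformBox a b
  set v := l.toFinset
  set c := ∏ i ∈ v, (b i - a i)
  set H : (ι → ℝ) → ℝ := fun z => ∫ t, ‖iteratedPartial l f (v.piecewise t z)‖ ∂μ
  have integrable_partial : Integrable (fun x => ‖iteratedPartial l f x‖) μ :=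
    (integrable_uniformBox_of_continuous hab (continuous_iteratedPartial hf)).norm
  have integrable_H : Integrable H μ :=
    (integrable_comp_finset_piecewise v integrable_partial).integral_prod_right
  have integrable_term (w : Finset ι) :
      Integrable (fun p : (ι → ℝ) × (ι → ℝ) => c * H (w.piecewise p.1 p.2)) (μ.prod μ) :=
    (integrable_comp_finset_piecewise w integrable_H).const_mul c
  have norm_le : ∀ᵐ p ∂μ.prod μ, ‖mixedDiff u f p.1 p.2‖ ≤
      ∑ w ∈ (u \ v).powerset, c * H (w.piecewise p.1 p.2) := by
    filter_upwards [Measure.quasiMeasurePreserving_fst.ae (ae_uniformBox_mem hab),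
      Measure.quasiMeasurePreserving_snd.ae (ae_uniformBox_mem hab)] with p hx hs
    exact norm_mixedDiff_le_sum_integral_iteratedPartial hab hl hlu hf hx hs
  calc ∫ p, ‖mixedDiff u f p.1 p.2‖ ∂μ.prod μ
      ≤ ∫ p, ∑ w ∈ (u \ v).powerset, c * H (w.piecewise p.1 p.2) ∂μ.prod μ :=
        integral_mono_of_nonneg (.of_forall fun p => norm_nonneg _)
          (integrable_finsetSum _ fun w _ => integrable_term w) norm_le
    _ = ∑ _w ∈ (u \ v).powerset, c * ∫ x, ‖iteratedPartial l f x‖ ∂μ := by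
        rw [integral_finsetSum _ fun w _ => integrable_term w]
        refine Finset.sum_congr rfl fun w _ => ?_
        rw [integral_const_mul, integral_comp_finset_piecewise w integrable_H.1,
          integral_integral_finset_piecewise v integrable_partial]
    _ = 2 ^ (u.card - v.card) * (c * ∫ x, ‖iteratedPartial l f x‖ ∂μ) := by
        rw [Finset.sum_const, Finset.card_powerset, Finset.card_sdiff_of_subset hlu, nsmul_eq_mul,
          Nat.cast_pow, Nat.cast_ofNat]

end Derivative

section Anova

variable {d : ℕ} {a b : Fin d → ℝ}

theorem anovaTerm_eq_integral_mixedDiff (hab : ∀ i, a i < b i) {f : (Fin d → ℝ) → ℝ}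
    (hf : Continuous f) (u : Finset (Fin d)) (x : Fin d → ℝ) :
    anovaTerm a b f u x = ∫ s, mixedDiff u f x s ∂uniformBox a b := by
  have integrable_term (w : Finset (Fin d)) :
      Integrable (fun s => (-1 : ℤ) ^ (u.card - w.card) • f (w.piecewise x s)) (uniformBox a b) :=
    integrable_uniformBox_of_continuous hab
      ((hf.comp (continuous_finset_piecewise w continuous_const continuous_id)).fun_const_smul _)
  simp only [mixedDiff]
  rw [integral_finsetSum _ fun w _ => integrable_term w]
  refine Finset.sum_congr rfl fun w _ => ?_
  have average_eq := integral_uniformBox_comp_subtype hab (· ∉ w) (s := wᶜ) (by simp)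
    fun s => f fun i => if h : i ∈ w then x i else s ⟨i, h⟩
  simp only [zsmul_eq_mul, Int.cast_pow, Int.cast_neg, Int.cast_one, integral_const_mul]
  rw [← smul_eq_mul (a := (∏ i ∈ wᶜ, (b i - a i))⁻¹), ← average_eq]
  rfl

theorem anovaTerm_congr {u : Finset (Fin d)} {x y : Fin d → ℝ} (hxy : ∀ i ∈ u, x i = y i)
    (f : (Fin d → ℝ) → ℝ) : anovaTerm a b f u x = anovaTerm a b f u y := by
  refine Finset.sum_congr rfl fun w hw => ?_
  have eq_on_w : ∀ i ∈ w, x i = y i := fun i hi => hxy i (Finset.mem_powerset.1 hw hi)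
  congr! 6 with s i
  split_ifs with h
  exacts [eq_on_w i h, rfl]

theorem integral_abs_anovaTerm_le (hab : ∀ i, a i < b i) {f : (Fin d → ℝ) → ℝ}
    (hf : Continuous f) (u : Finset (Fin d)) :
    ∫ x, |anovaTerm a b f u x| ∂uniformBox a b ≤
      ∫ p, ‖mixedDiff u f p.1 p.2‖ ∂(uniformBox a b).prod (uniformBox a b) := by
  have := fun i => isProbabilityMeasure_cond_Icc (hab i)
  have integrable_norm := (integrable_mixedDiff u
    (integrable_uniformBox_of_continuous hab hf)).norm
  rw [integral_prod _ integrable_norm]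
  refine integral_mono_of_nonneg (.of_forall fun x => abs_nonneg _)
    integrable_norm.integral_prod_left (.of_forall fun x => ?_)
  simp only [anovaTerm_eq_integral_mixedDiff hab hf]
  exact norm_integral_le_integral_norm (mixedDiff u f x)

end Anova

/-- for `v ⊆ u` and `f` which is `|v|` times continuously
differentiable, the ANOVA term satisfies the `L¹` bound
`∫_{D_u} |f_{u,A}(x_u)| dx_u ≤ 2^{|u|−|v|} (vol(D_u) vol(D_v) / vol(D)) ∫_D |∂_v f|`.
Since `f_{u,A}` depends only on the coordinates in `u`, it is regarded as a
function on `D_u` by filling the remaining coordinates with `a i`. -/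
theorem statement_6 {d : ℕ} (a b : Fin d → ℝ) (hab : ∀ i, a i < b i)
    (u v : Finset (Fin d)) (hvu : v ⊆ u)
    (f : (Fin d → ℝ) → ℝ) (hf : ContDiff ℝ v.card f) :
    (∫ y : {i : Fin d // i ∈ u} → ℝ in
        Set.univ.pi (fun i : {i : Fin d // i ∈ u} => Set.Icc (a i.1) (b i.1)),
      |anovaTerm a b f u (fun i => if h : i ∈ u then y ⟨i, h⟩ else a i)|) ≤
      2 ^ (u.card - v.card) *
        ((∏ i ∈ u, (b i - a i)) * (∏ i ∈ v, (b i - a i)) / ∏ i, (b i - a i)) *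
        ∫ x in Set.univ.pi fun i => Set.Icc (a i) (b i), |mixedPartial v f x| := by
  have vol_pos : 0 < ∏ i ∈ u, (b i - a i) :=
    Finset.prod_pos fun i _ => sub_pos.2 (hab i)
  have average_le := (integral_abs_anovaTerm_le hab hf.continuous u).trans
    (integral_norm_mixedDiff_le hab v.nodup_toList (by simpa using hvu)
      (by rwa [Finset.length_toList]))
  have average_anovaTerm := integral_uniformBox_comp_subtype hab (· ∈ u) (fun _ => Iff.rfl)
    fun y => |anovaTerm a b f u fun i => if h : i ∈ u then y ⟨i, h⟩ else a i|
  have anovaTerm_restrict (x : Fin d → ℝ) :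
      anovaTerm a b f u (fun i => if i ∈ u then x i else a i) = anovaTerm a b f u x :=
    anovaTerm_congr (fun i hi => if_pos hi) f
  simp only [dite_eq_ite, anovaTerm_restrict, smul_eq_mul] at average_anovaTerm
  rw [average_anovaTerm, inv_mul_le_iff₀ vol_pos, integral_uniformBox hab,
    Finset.toList_toFinset] at average_le
  refine average_le.trans_eq ?_
  simp only [smul_eq_mul, iteratedPartial, mixedPartial, Real.norm_eq_abs]
  ring
end

section
/- Let d ≥ 2 and h ∈ (0,1). For every V ∈ SO(d) there exist angles α^r_j for r = 1, …, d−1 and j = 1, …, r, each an integer multiple of h, with α^r_1 ∈ [0, 2π) and α^r_j ∈ [0, π) for j ≥ 2, such that ‖V − U(α)‖_F ≤ d(d−1)h, where U(α) := ∏_{r=1}^{d−1} ∏_{j=1}^{r} R(d − 1 − r + j, α^r_j). -/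
open Matrix

/-- The Jacobi (Givens) rotation matrix acting in the coordinate plane
`(k, k+1)` (0-indexed; the paper's 1-indexed `R(k+1, θ)`). -/
noncomputable def givens (d : ℕ) (k : ℕ) (θ : ℝ) : Matrix (Fin d) (Fin d) ℝ :=
  Matrix.of fun i j =>
    if (i : ℕ) = k ∧ (j : ℕ) = k then Real.cos θ
    else if (i : ℕ) = k ∧ (j : ℕ) = k + 1 then -Real.sin θ
    else if (i : ℕ) = k + 1 ∧ (j : ℕ) = k then Real.sin θ
    else if (i : ℕ) = k + 1 ∧ (j : ℕ) = k + 1 then Real.cos θ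
    else if i = j then 1 else 0

/-!
Every `V ∈ SO(d)` is a Hurwitz product: if the rows of `V` before the `k`-th are those of the
identity, the `k`-th row is carried to a nonnegative multiple of the `k`-th basis vector by inverse
Givens rotations which clear its coordinates from the last one backwards, and by orthogonality this
multiple is `1`. Dividing `V` by the resulting chain of rotations fixes one more row, and after
`d - 1` chains only the identity is left, since `det V = 1`.

Rounding each of the `d.choose 2` angles down to a multiple of `h` keeps it in its half-open
interval and moves the corresponding rotation by at most `√2 h` in the Frobenius norm. The norm is
invariant under multiplication by orthogonal matrices, so the errors in a product of rotations at
most add up, to `√2 * d.choose 2 * h ≤ d (d - 1) h`.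
-/

section Frobenius

open scoped Matrix.Norms.Frobenius

variable {m n 𝕜 : Type*} [Fintype m] [Fintype n] [RCLike 𝕜]

lemma frobenius_norm_sq_eq_re_trace (X : Matrix m n 𝕜) :
    ‖X‖ ^ 2 = RCLike.re (Xᴴ * X).trace := by
  rw [frobenius_norm_def, ← Real.sqrt_eq_rpow, Real.sq_sqrt (by positivity), Finset.sum_comm]
  simp only [trace, diag_apply, mul_apply, conjTranspose_apply, map_sum, RCLike.star_def,
    RCLike.conj_mul, Real.rpow_ofNat]
  norm_cast

lemma sqrt_trace_transpose_mul_self (X : Matrix m n ℝ) : √(Xᵀ * X).trace = ‖X‖ := by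
  rw [← Real.sqrt_sq (norm_nonneg X), frobenius_norm_sq_eq_re_trace,
    conjTranspose_eq_transpose_of_trivial, RCLike.re_to_real]

lemma frobenius_norm_mul_of_mem_unitaryGroup_left [DecidableEq m] {A : Matrix m m 𝕜}
    (hA : A ∈ unitaryGroup m 𝕜) (X : Matrix m n 𝕜) : ‖A * X‖ = ‖X‖ := by
  have hA' : Aᴴ * A = 1 := mem_unitaryGroup_iff'.mp hA
  rw [← sq_eq_sq₀ (norm_nonneg _) (norm_nonneg _), frobenius_norm_sq_eq_re_trace,
    frobenius_norm_sq_eq_re_trace, conjTranspose_mul, Matrix.mul_assoc, ← Matrix.mul_assoc Aᴴ, hA',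
    Matrix.one_mul]

lemma frobenius_norm_mul_of_mem_unitaryGroup_right [DecidableEq n] {A : Matrix n n 𝕜}
    (hA : A ∈ unitaryGroup n 𝕜) (X : Matrix m n 𝕜) : ‖X * A‖ = ‖X‖ := by
  rw [← frobenius_norm_conjTranspose, conjTranspose_mul,
    frobenius_norm_mul_of_mem_unitaryGroup_left (A := Aᴴ) (Unitary.star_mem hA),
    frobenius_norm_conjTranspose]

lemma frobenius_norm_list_prod_sub_le [DecidableEq n] {F G : ℕ → Matrix n n 𝕜} {N : ℕ}
    (hF : ∀ i < N, F i ∈ unitaryGroup n 𝕜) (hG : ∀ i < N, G i ∈ unitaryGroup n 𝕜) :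
    ‖((List.range N).map F).prod - ((List.range N).map G).prod‖ ≤
      ∑ i ∈ Finset.range N, ‖F i - G i‖ := by
  induction N with
  | zero => simp
  | succ N ih =>
    have hFN : ((List.range N).map F).prod ∈ unitaryGroup n 𝕜 :=
      list_prod_mem <| by simpa using fun i hi => hF i (Nat.lt_succ_of_lt hi)
    rw [List.prod_range_succ, List.prod_range_succ, Finset.sum_range_succ]
    generalize ((List.range N).map F).prod = P at hFN ih ⊢
    generalize ((List.range N).map G).prod = Q at ih ⊢
    calc ‖P * F N - Q * G N‖ = ‖(P - Q) * G N + P * (F N - G N)‖ := by congr 1; noncomm_ring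
      _ ≤ ‖(P - Q) * G N‖ + ‖P * (F N - G N)‖ := norm_add_le _ _
      _ = ‖P - Q‖ + ‖F N - G N‖ := by
        rw [frobenius_norm_mul_of_mem_unitaryGroup_right (hG N N.lt_succ_self),
          frobenius_norm_mul_of_mem_unitaryGroup_left hFN]
      _ ≤ _ := by
        gcongr
        exact ih (fun i hi => hF i (Nat.lt_succ_of_lt hi)) fun i hi => hG i (Nat.lt_succ_of_lt hi)

end Frobenius

section UnitaryGroup

variable {n R : Type*} [Fintype n] [DecidableEq n] [CommRing R] [StarRing R] {V : Matrix n n R}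

lemma col_eq_single_of_row_eq_single (hV : V ∈ unitaryGroup n R) {i : n}
    (hi : V.row i = Pi.single i 1) : V.col i = Pi.single i 1 := by
  have h : Pi.single i 1 ᵥ* Vᴴ = Pi.single i 1 := by
    nth_rw 1 [← hi, ← single_one_vecMul i V, vecMul_vecMul, ← star_eq_conjTranspose,
      mem_unitaryGroup_iff.mp hV, vecMul_one]
  ext j
  have := congr_arg star (congr_fun h j)
  simpa [Pi.single_apply, apply_ite] using this

lemma eq_one_of_row_eq_single (hV : V ∈ specialUnitaryGroup n R) (i₀ : n)
    (hrow : ∀ i ≠ i₀, V.row i = Pi.single i 1) : V = 1 := by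
  have hdiag : V = diagonal fun i => V i i := by
    ext i j
    rcases eq_or_ne i j with rfl | hij
    · rw [diagonal_apply_eq]
    rw [diagonal_apply_ne _ hij]
    by_cases hi : i = i₀
    · have hcol := col_eq_single_of_row_eq_single hV.1 (hrow j (hi ▸ hij.symm))
      simpa [hij] using congr_fun hcol i
    · simpa [hij.symm] using congr_fun (hrow i hi) j
  have hone : ∀ i ≠ i₀, V i i = 1 := fun i hi => by simpa using congr_fun (hrow i hi) i
  have hdet : V i₀ i₀ = 1 := by
    rw [← (mem_specialUnitaryGroup_iff.mp hV).2, hdiag, det_diagonal,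
      Finset.prod_eq_single i₀ (fun i _ hi => hone i hi) (by simp), diagonal_apply_eq]
  rw [hdiag, ← diagonal_one]
  congr with i
  by_cases hi : i = i₀
  · rw [hi, hdet]
  · exact hone i hi

end UnitaryGroup

section Polar

open Real Set

lemma exists_polar_coord_Ico_two_pi (x y : ℝ) :
    ∃ r, 0 ≤ r ∧ ∃ θ ∈ Ico 0 (2 * π), x = r * cos θ ∧ y = r * sin θ := by
  refine ⟨‖(⟨x, y⟩ : ℂ)‖, norm_nonneg _, toIcoMod two_pi_pos 0 (Complex.arg ⟨x, y⟩),
    toIcoMod_mem_Ico' _ _, ?_, ?_⟩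
  · rw [toIcoMod, cos_periodic.sub_zsmul_eq, Complex.norm_mul_cos_arg]
  · rw [toIcoMod, sin_periodic.sub_zsmul_eq, Complex.norm_mul_sin_arg]

lemma exists_polar_coord_Ico_pi (x y : ℝ) :
    ∃ r, ∃ θ ∈ Ico 0 π, x = r * cos θ ∧ y = r * sin θ := by
  obtain ⟨r, -, θ, ⟨hθ₀, hθ₁⟩, hx, hy⟩ := exists_polar_coord_Ico_two_pi x y
  rcases lt_or_ge θ π with hθ | hθ
  · exact ⟨r, θ, ⟨hθ₀, hθ⟩, hx, hy⟩
  · refine ⟨-r, θ - π, ⟨by linarith, by linarith⟩, ?_, ?_⟩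
    · rw [cos_sub_pi, neg_mul_neg, hx]
    · rw [sin_sub_pi, neg_mul_neg, hy]

end Polar

section Givens

lemma givens_zero (d k : ℕ) : givens d k 0 = 1 := by
  ext i j
  simp only [givens, of_apply, one_apply, Fin.ext_iff, Real.cos_zero, Real.sin_zero, neg_zero]
  grind

lemma transpose_givens (d k : ℕ) (θ : ℝ) : (givens d k θ)ᵀ = givens d k (-θ) := by
  ext i j
  simp only [givens, of_apply, transpose_apply, Real.cos_neg, Real.sin_neg, neg_neg]
  grind

variable {d : ℕ} {p q : Fin d}

lemma givens_eq_one_add_single (hpq : (q : ℕ) = p + 1) (θ : ℝ) :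
    givens d p θ = 1 + (Real.cos θ - 1) • (single p p 1 + single q q 1) +
      Real.sin θ • (single q p 1 - single p q 1) := by
  ext i j
  simp only [givens, of_apply, Matrix.add_apply, Matrix.sub_apply, Matrix.smul_apply,
    one_apply, single_apply, smul_eq_mul, Fin.ext_iff, hpq]
  grind

lemma givens_mul_givens (hpq : (q : ℕ) = p + 1) (θ φ : ℝ) :
    givens d p θ * givens d p φ = givens d p (θ + φ) := by
  have hne : p ≠ q := by grind
  simp only [givens_eq_one_add_single hpq, Real.cos_add, Real.sin_add, add_mul, mul_add, sub_mul,
    mul_sub, one_mul, mul_one, smul_mul_assoc, mul_smul_comm, single_mul_single_same,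
    single_mul_single_of_ne _ _ _ _ hne, single_mul_single_of_ne _ _ _ _ hne.symm]
  module

lemma givens_mem_specialOrthogonalGroup (hpq : (q : ℕ) = p + 1) (θ : ℝ) :
    givens d p θ ∈ specialOrthogonalGroup (Fin d) ℝ := by
  have horth (φ : ℝ) : (givens d p φ)ᵀ * givens d p φ = 1 := by
    rw [transpose_givens, givens_mul_givens hpq, neg_add_cancel, givens_zero]
  refine mem_specialOrthogonalGroup_iff.mpr ⟨(mem_orthogonalGroup_iff' _ _).mpr (horth θ), ?_⟩
  -- A rotation is the square of the rotation by half the angle, so its determinant cannot be `-1`.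
  calc (givens d p θ).det = ((givens d p (θ / 2))ᵀ * givens d p (θ / 2)).det := by
        rw [det_mul, det_transpose, ← det_mul, givens_mul_givens hpq, add_halves]
    _ = 1 := by rw [horth, det_one]

lemma vecMul_givens (hpq : (q : ℕ) = p + 1) (θ : ℝ) (v : Fin d → ℝ) :
    v ᵥ* givens d p θ = v + Pi.single p ((Real.cos θ - 1) * v p + Real.sin θ * v q) +
      Pi.single q ((Real.cos θ - 1) * v q - Real.sin θ * v p) := by
  have hsingle (i j : Fin d) : v ᵥ* single i j 1 = Pi.single j (v i) := by
    ext l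
    simp [vecMul, dotProduct, single_apply, Pi.single_apply, ite_and, eq_comm]
  simp only [givens_eq_one_add_single hpq, vecMul_add, vecMul_sub, vecMul_smul, vecMul_one, hsingle,
    sub_mul, Pi.single_add, Pi.single_sub, smul_add, smul_sub, ← Pi.single_smul, smul_eq_mul,
    one_mul]
  abel

lemma trace_givens (hpq : (q : ℕ) = p + 1) (θ : ℝ) :
    (givens d p θ).trace = d + 2 * (Real.cos θ - 1) := by
  have hne : p ≠ q := by grind
  simp only [givens_eq_one_add_single hpq, trace_add, trace_sub, trace_smul, trace_one,
    Fintype.card_fin, trace_single_eq_same, trace_single_eq_of_ne _ _ _ hne,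
    trace_single_eq_of_ne _ _ _ hne.symm, smul_eq_mul]
  ring

open scoped Matrix.Norms.Frobenius in
lemma frobenius_norm_givens_sub_givens_le (hpq : (q : ℕ) = p + 1) (θ φ : ℝ) :
    ‖givens d p θ - givens d p φ‖ ≤ √2 * |θ - φ| := by
  have hsq : ‖givens d p θ - givens d p φ‖ ^ 2 = 4 * (1 - Real.cos (θ - φ)) := by
    rw [frobenius_norm_sq_eq_re_trace, conjTranspose_eq_transpose_of_trivial, transpose_sub,
      sub_mul, mul_sub, mul_sub]
    simp only [transpose_givens, givens_mul_givens hpq, trace_sub, trace_givens hpq,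
      RCLike.re_to_real, neg_add_eq_sub, sub_self, Real.cos_zero]
    rw [← neg_sub θ φ, Real.cos_neg]
    ring
  refine le_of_sq_le_sq ?_ (by positivity)
  rw [hsq, mul_pow, Real.sq_sqrt zero_le_two, sq_abs]
  linarith [Real.one_sub_sq_div_two_le_cos (x := θ - φ)]

end Givens

/-- The product of Givens rotations in the consecutive coordinate planes
`(k, k + 1), …, (k + n - 1, k + n)` by the angles `t 0, …, t (n - 1)`: one inner product of the
Hurwitz parametrization. -/
noncomputable def givensChain (d k n : ℕ) (t : ℕ → ℝ) : Matrix (Fin d) (Fin d) ℝ :=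
  ((List.range n).map fun j => givens d (k + j) (t j)).prod

/-- The product of the first `n` chains of the Hurwitz parametrization of `SO(d)`, so that the
paper's `U(α)` is `hurwitzProd d (d - 1) α`. The subtraction `d - 2 - r` does not truncate for
the indices `r < d - 1` that occur there. -/
noncomputable def hurwitzProd (d n : ℕ) (α : ℕ → ℕ → ℝ) : Matrix (Fin d) (Fin d) ℝ :=
  ((List.range n).map fun r => givensChain d (d - 2 - r) (r + 1) (α r)).prod

/-- The length of the half-open interval `[0, ·)` of admissible angles at position `j` of a chain,
counted from `0`. -/
noncomputable def hurwitzAngleBound : ℕ → ℝ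
  | 0 => 2 * Real.pi
  | _ + 1 => Real.pi

section GivensChain

variable {d k n : ℕ} {t : ℕ → ℝ}

lemma givensChain_succ (d k n : ℕ) (t : ℕ → ℝ) :
    givensChain d k (n + 1) t = givensChain d k n t * givens d (k + n) (t n) :=
  List.prod_range_succ _ _

lemma givensChain_congr {s : ℕ → ℝ} (h : ∀ j < n, s j = t j) :
    givensChain d k n s = givensChain d k n t := by
  unfold givensChain
  congr 1
  exact List.map_congr_left fun j hj => by rw [h j (List.mem_range.mp hj)]

lemma givensChain_mem_specialOrthogonalGroup (hn : k + n < d) (t : ℕ → ℝ) :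
    givensChain d k n t ∈ specialOrthogonalGroup (Fin d) ℝ := by
  refine list_prod_mem fun M hM => ?_
  obtain ⟨j, hj, rfl⟩ := List.mem_map.mp hM
  have hj : j < n := List.mem_range.mp hj
  exact givens_mem_specialOrthogonalGroup (p := ⟨k + j, by lia⟩) (q := ⟨k + j + 1, by lia⟩) rfl _

lemma vecMul_givensChain_of_eq_zero (hn : k + n < d) {v : Fin d → ℝ}
    (hv : ∀ i : Fin d, k ≤ i → v i = 0) (t : ℕ → ℝ) : v ᵥ* givensChain d k n t = v := by
  induction n with
  | zero => simp [givensChain]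
  | succ n ih =>
    rw [givensChain_succ, ← vecMul_vecMul, ih (by lia),
      vecMul_givens (p := ⟨k + n, by lia⟩) (q := ⟨k + n + 1, by lia⟩) rfl,
      hv _ (by simp), hv _ (by simp [add_assoc])]
    simp

lemma update_update_vecMul_givens {p q : Fin d} (hpq : (q : ℕ) = p + 1) {v : Fin d → ℝ} {r θ : ℝ}
    (hp : v p = r * Real.cos θ) (hq : v q = -(r * Real.sin θ)) :
    Function.update (Function.update v p r) q 0 ᵥ* givens d p θ = v := by
  have hne : p ≠ q := by grind
  rw [vecMul_givens hpq]
  ext i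
  simp only [Pi.add_apply, Pi.single_apply, Function.update_apply]
  grind

/-- The last rotation is chosen first, so that its inverse clears the last nonzero coordinate of
`v`. An angle in `[0, π)` suffices because the sign of the coordinate left behind is free; only the
first rotation also has to make it nonnegative. -/
lemma exists_single_vecMul_givensChain_eq (hn : k + n + 1 < d) {v : Fin d → ℝ}
    (hv : ∀ i, v i ≠ 0 → k ≤ (i : ℕ) ∧ (i : ℕ) ≤ k + n + 1) :
    ∃ r, 0 ≤ r ∧ ∃ t : ℕ → ℝ, (∀ j, t j ∈ Set.Ico 0 (hurwitzAngleBound j)) ∧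
      Pi.single ⟨k, by lia⟩ r ᵥ* givensChain d k (n + 1) t = v := by
  induction n generalizing v with
  | zero =>
    set p : Fin d := ⟨k, by lia⟩
    set q : Fin d := ⟨k + 1, by lia⟩
    obtain ⟨r, hr, θ, hθ, hp, hq⟩ := exists_polar_coord_Ico_two_pi (v p) (-v q)
    refine ⟨r, hr, Function.update 0 0 θ, ?_, ?_⟩
    · rintro (_ | j)
      · simpa [hurwitzAngleBound] using hθ
      · simp [hurwitzAngleBound, Real.pi_pos]
    · have hsingle : Pi.single p r = Function.update (Function.update v p r) q 0 := by
        ext i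
        simp only [Pi.single_apply, Function.update_apply]
        grind
      rw [hsingle]
      simpa [givensChain] using update_update_vecMul_givens (p := p) (q := q) rfl hp (by linarith)
  | succ n ih =>
    set p : Fin d := ⟨k + n + 1, by lia⟩
    set q : Fin d := ⟨k + n + 2, by lia⟩
    obtain ⟨s, θ, hθ, hp, hq⟩ := exists_polar_coord_Ico_pi (v p) (-v q)
    obtain ⟨r, hr, t, ht, htv⟩ :=
        ih (v := Function.update (Function.update v p s) q 0) (by lia) fun i hi => by
      simp only [Function.update_apply] at hi
      grind
    refine ⟨r, hr, Function.update t (n + 1) θ, fun j => ?_, ?_⟩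
    · rcases eq_or_ne j (n + 1) with rfl | hj
      · simpa [hurwitzAngleBound] using hθ
      · simpa [hj] using ht j
    · rw [givensChain_succ, ← vecMul_vecMul, Function.update_self,
        givensChain_congr fun j hj => Function.update_of_ne hj.ne θ t, htv]
      exact update_update_vecMul_givens (p := p) (q := q) rfl hp (by linarith)

open scoped Matrix.Norms.Frobenius in
lemma frobenius_norm_givensChain_sub_le (hn : k + n < d) (s t : ℕ → ℝ) :
    ‖givensChain d k n s - givensChain d k n t‖ ≤ √2 * ∑ j ∈ Finset.range n, |s j - t j| := by
  have hmem (u : ℕ → ℝ) (j : ℕ) (hj : j < n) :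
      givens d (k + j) (u j) ∈ unitaryGroup (Fin d) ℝ :=
    (givens_mem_specialOrthogonalGroup (p := ⟨k + j, by lia⟩) (q := ⟨k + j + 1, by lia⟩) rfl _).1
  refine (frobenius_norm_list_prod_sub_le (hmem s) (hmem t)).trans ?_
  rw [Finset.mul_sum]
  gcongr with j hj
  have hj : j < n := Finset.mem_range.mp hj
  exact frobenius_norm_givens_sub_givens_le
    (p := ⟨k + j, by lia⟩) (q := ⟨k + j + 1, by lia⟩) rfl _ _

end GivensChain

section Hurwitz

variable {d n : ℕ}

lemma hurwitzProd_succ (d n : ℕ) (α : ℕ → ℕ → ℝ) :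
    hurwitzProd d (n + 1) α = hurwitzProd d n α * givensChain d (d - 2 - n) (n + 1) (α n) :=
  List.prod_range_succ _ _

lemma hurwitzProd_congr {α β : ℕ → ℕ → ℝ} (h : ∀ r < n, α r = β r) :
    hurwitzProd d n α = hurwitzProd d n β := by
  unfold hurwitzProd
  congr 1
  exact List.map_congr_left fun r hr => by rw [h r (List.mem_range.mp hr)]

lemma exists_row_givensChain_eq_row {k : ℕ} (hn : k + n + 2 = d) {V : Matrix (Fin d) (Fin d) ℝ}
    (hV : V ∈ specialOrthogonalGroup (Fin d) ℝ)
    (hrow : ∀ i : Fin d, (i : ℕ) < k → V.row i = Pi.single i 1) :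
    ∃ t : ℕ → ℝ, (∀ j, t j ∈ Set.Ico 0 (hurwitzAngleBound j)) ∧
      ∀ i : Fin d, (i : ℕ) ≤ k → (givensChain d k (n + 1) t).row i = V.row i := by
  set p : Fin d := ⟨k, by lia⟩
  have hsupp (i : Fin d) (hi : V p i ≠ 0) : k ≤ (i : ℕ) ∧ (i : ℕ) ≤ k + n + 1 := by
    refine ⟨?_, by lia⟩
    by_contra! hik
    have hpi : p ≠ i := by grind
    exact hi (by simpa [hpi] using congr_fun (col_eq_single_of_row_eq_single hV.1 (hrow i hik)) p)
  obtain ⟨r, hr, t, ht, hrt⟩ := exists_single_vecMul_givensChain_eq (by lia) hsupp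
  have hE := (givensChain_mem_specialOrthogonalGroup (d := d) (k := k) (n := n + 1) (by lia) t).1
  have hunit {A : Matrix (Fin d) (Fin d) ℝ} (hA : A ∈ orthogonalGroup (Fin d) ℝ) :
      A.row p ⬝ᵥ A.row p = 1 := by
    rw [← one_apply_eq p, ← (mem_orthogonalGroup_iff _ _).mp hA]
    rfl
  have hsq : r ^ 2 = 1 := by
    have hVp : r • (givensChain d k (n + 1) t).row p = V.row p := by rw [← single_vecMul, hrt, row]
    simpa [← hVp, hunit hE, sq] using hunit hV.1
  have hr1 : r = 1 := (pow_eq_one_iff_of_nonneg hr two_ne_zero).mp hsq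
  refine ⟨t, ht, fun i hi => ?_⟩
  rcases hi.lt_or_eq with hik | hik
  · rw [hrow i hik, ← single_one_vecMul, vecMul_givensChain_of_eq_zero (by lia)]
    exact fun l hl => Pi.single_eq_of_ne (by grind) _
  · obtain rfl : i = p := Fin.ext hik
    rw [← single_one_vecMul, ← hr1]
    exact hrt

theorem exists_hurwitzProd_eq_of_row_eq_single (hn : n < d) {V : Matrix (Fin d) (Fin d) ℝ}
    (hV : V ∈ specialOrthogonalGroup (Fin d) ℝ)
    (hrow : ∀ i : Fin d, (i : ℕ) + 1 + n < d → V.row i = Pi.single i 1) :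
    ∃ α : ℕ → ℕ → ℝ, (∀ r j, α r j ∈ Set.Ico 0 (hurwitzAngleBound j)) ∧ hurwitzProd d n α = V := by
  induction n generalizing V with
  | zero =>
    refine ⟨0, fun _ j => ?_, ?_⟩
    · cases j <;> simp [hurwitzAngleBound, Real.pi_pos]
    · rw [eq_one_of_row_eq_single hV ⟨d - 1, by lia⟩ fun i hi => hrow i (by grind)]
      simp [hurwitzProd]
  | succ n ih =>
    obtain ⟨t, ht, hrt⟩ := exists_row_givensChain_eq_row (n := n) (k := d - 2 - n) (by lia) hV
      fun i hi => hrow i (by lia)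
    have hE := givensChain_mem_specialOrthogonalGroup
      (d := d) (k := d - 2 - n) (n := n + 1) (by lia) t
    set E := givensChain d (d - 2 - n) (n + 1) t with hEdef
    have hEstar : star E ∈ specialOrthogonalGroup (Fin d) ℝ :=
      (star (⟨E, hE⟩ : specialOrthogonalGroup (Fin d) ℝ)).2
    obtain ⟨α, hα, hαV⟩ := ih (by lia) (mul_mem hV hEstar) fun i hi => by
      rw [← single_one_vecMul, ← vecMul_vecMul, single_one_vecMul, ← hrt i (by lia),
        ← single_one_vecMul, vecMul_vecMul, mem_unitaryGroup_iff.mp hE.1, vecMul_one]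
    refine ⟨Function.update α n t, fun r => ?_, ?_⟩
    · rcases eq_or_ne r n with rfl | hr
      · simpa using ht
      · simpa [hr] using hα r
    · rw [hurwitzProd_succ, hurwitzProd_congr fun r hr => Function.update_of_ne hr.ne t α, hαV,
        Function.update_self, ← hEdef, Matrix.mul_assoc, mem_unitaryGroup_iff'.mp hE.1,
        Matrix.mul_one]

theorem exists_hurwitzProd_eq (hd : 0 < d) {V : Matrix (Fin d) (Fin d) ℝ}
    (hV : V ∈ specialOrthogonalGroup (Fin d) ℝ) :
    ∃ α : ℕ → ℕ → ℝ, (∀ r j, α r j ∈ Set.Ico 0 (hurwitzAngleBound j)) ∧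
      hurwitzProd d (d - 1) α = V :=
  exists_hurwitzProd_eq_of_row_eq_single (by lia) hV fun i hi => by lia

end Hurwitz

section Grid

open scoped Matrix.Norms.Frobenius

lemma frobenius_norm_hurwitzProd_sub_le {d n : ℕ} (hn : n < d) (α β : ℕ → ℕ → ℝ) :
    ‖hurwitzProd d n α - hurwitzProd d n β‖ ≤
      √2 * ∑ r ∈ Finset.range n, ∑ j ∈ Finset.range (r + 1), |α r j - β r j| := by
  have hmem (γ : ℕ → ℕ → ℝ) (r : ℕ) (hr : r < n) :
      givensChain d (d - 2 - r) (r + 1) (γ r) ∈ unitaryGroup (Fin d) ℝ :=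
    (givensChain_mem_specialOrthogonalGroup (by lia) _).1
  refine (frobenius_norm_list_prod_sub_le (hmem α) (hmem β)).trans ?_
  rw [Finset.mul_sum]
  gcongr with r hr
  exact frobenius_norm_givensChain_sub_le (by grind) _ _

lemma exists_nat_mul_le_and_sub_lt {K : Type*} [Field K] [LinearOrder K] [IsStrictOrderedRing K]
    [FloorSemiring K] {h x : K} (hh : 0 < h) (hx : 0 ≤ x) :
    ∃ m : ℕ, m * h ≤ x ∧ x - m * h < h :=
  ⟨⌊x / h⌋₊, (le_div_iff₀ hh).mp (Nat.floor_le (by positivity)), by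
    linarith [(div_lt_iff₀ hh).mp (Nat.lt_floor_add_one (x / h))]⟩

theorem statement_16_general {d : ℕ} (hd : 0 < d) {h : ℝ} (hh : 0 < h)
    {V : Matrix (Fin d) (Fin d) ℝ} (hV : V ∈ specialOrthogonalGroup (Fin d) ℝ) :
    ∃ α : ℕ → ℕ → ℝ, (∀ r j, ∃ m : ℕ, α r j = m * h) ∧
      (∀ r j, α r j ∈ Set.Ico 0 (hurwitzAngleBound j)) ∧
      ‖V - hurwitzProd d (d - 1) α‖ ≤ √2 * (d.choose 2 * h) := by
  obtain ⟨β, hβ, rfl⟩ := exists_hurwitzProd_eq hd hV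
  choose m hm hmβ using fun r j => exists_nat_mul_le_and_sub_lt hh (hβ r j).1
  refine ⟨fun r j => m r j * h, fun r j => ⟨m r j, rfl⟩,
    fun r j => ⟨by positivity, (hm r j).trans_lt (hβ r j).2⟩, ?_⟩
  refine (frobenius_norm_hurwitzProd_sub_le (by lia) _ _).trans ?_
  gcongr
  calc ∑ r ∈ Finset.range (d - 1), ∑ j ∈ Finset.range (r + 1), |β r j - m r j * h|
      ≤ ∑ r ∈ Finset.range (d - 1), ∑ _j ∈ Finset.range (r + 1), h := by
        gcongr with r _ j _
        rw [abs_of_nonneg (sub_nonneg.mpr (hm r j))]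
        exact (hmβ r j).le
    _ = (∑ r ∈ Finset.range (d - 1), (r + 1) : ℕ) * h := by
        simp [Finset.sum_mul]
    _ = d.choose 2 * h := by
        rw [Nat.choose_two_right, ← Finset.sum_range_id, ← Nat.sub_add_cancel hd,
          Finset.sum_range_succ', add_zero, Nat.add_sub_cancel]

end Grid

/-- grid search bound: for `d ≥ 2`, `h ∈ (0,1)` and `V ∈ SO(d)`
there are grid angles `α^r_j` (integer multiples of `h`, with `α^r_1 ∈ [0,2π)`
and `α^r_j ∈ [0,π)` for `j ≥ 2`) such that `‖V − U(α)‖_F ≤ d(d−1)h`, where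
`U(α) = ∏_{r=1}^{d−1} ∏_{j=1}^{r} R(d−1−r+j, α^r_j)`.  Indices are re-indexed
from `0` (`r = r'+1`, `j = j'+1`), the Frobenius norm is `√(tr(XᵀX))`, and the
products are ordered lists. -/
theorem statement_16 (d : ℕ) (hd : 2 ≤ d) (h : ℝ) (hh0 : 0 < h) (hh1 : h < 1)
    (V : Matrix (Fin d) (Fin d) ℝ) (hV : Vᵀ * V = 1) (hdet : V.det = 1) :
    ∃ α : ℕ → ℕ → ℝ,
      (∀ r' < d - 1, ∀ j' ≤ r', ∃ m : ℕ, α r' j' = m * h) ∧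
      (∀ r' < d - 1, α r' 0 ∈ Set.Ico 0 (2 * Real.pi) ∧
        ∀ j', 1 ≤ j' → j' ≤ r' → α r' j' ∈ Set.Ico 0 Real.pi) ∧
      Real.sqrt (Matrix.trace
          ((V - ((List.range (d - 1)).map fun r' =>
              (((List.range (r' + 1)).map fun j' =>
                givens d (d - 2 - r' + j') (α r' j')).prod)).prod)ᵀ *
            (V - ((List.range (d - 1)).map fun r' =>
              (((List.range (r' + 1)).map fun j' =>
                givens d (d - 2 - r' + j') (α r' j')).prod)).prod))) ≤
        d * (d - 1) * h := by
  obtain ⟨α, hgrid, hrange, hle⟩ := statement_16_general (by lia) hh0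
    (mem_specialOrthogonalGroup_iff.mpr ⟨(mem_orthogonalGroup_iff' _ _).mpr hV, hdet⟩)
  refine ⟨α, fun r _ j _ => hgrid r j,
    fun r _ => ⟨hrange r 0, fun | j + 1, _, _ => hrange r (j + 1)⟩,
    (sqrt_trace_transpose_mul_self _).trans_le (hle.trans ?_)⟩
  calc √2 * (d.choose 2 * h) ≤ 2 * (d.choose 2 * h) := by
        gcongr
        exact Real.sqrt_le_self_iff.mpr (Or.inr one_le_two)
    _ = d * (d - 1) * h := by rw [Nat.cast_choose_two]; ring
end
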